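/- arXiv:2601.22520 — 2 statements merged into one kernel-verified Lean document; each statement's English description precedes it below -/
import Mathlib

section
/- Let N ≥ 1 and 0 < γ/θ < N for some θ ∈ (0,1]. For the heat semigroup e^{tΔ} on ℝ^N with Gaussian kernel G(x,t) = (4πt)^{−N/2} e^{−|x|²/(4t)} and any nonnegative φ ∈ L¹_ul(ℝ^N), there is a constant C = C(N, γ/θ) such that e^{tΔ}[|·|^{−γ/θ} e^{sΔ}φ](x) ≤ C (1/t + 1/s)^{γ/(2θ)} [e^{(t+s)Δ}φ](x) for all t, s > 0 and a.e. x. -/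
open MeasureTheory Filter Set Metric Real

/-- The Gaussian heat kernel on ℝ^N. -/
noncomputable def heatKernel (N : ℕ) (x : EuclideanSpace ℝ (Fin N)) (t : ℝ) : ℝ :=
  (4 * π * t) ^ (-(N : ℝ) / 2) * Real.exp (-‖x‖ ^ 2 / (4 * t))

/-- Membership in the uniformly local L¹ space L¹_ul(ℝ^N). -/
def MemL1ul (N : ℕ) (φ : EuclideanSpace ℝ (Fin N) → ℝ) : Prop :=
  (∀ y, MeasureTheory.IntegrableOn φ (Metric.ball y 1)) ∧
  ∃ M : ℝ, ∀ y, (∫ x in Metric.ball y 1, |φ x|) ≤ M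


theorem hk_nonneg (N : ℕ) (x : EuclideanSpace ℝ (Fin N)) {t : ℝ} (ht : 0 < t) :
    0 ≤ heatKernel N x t := by
  unfold heatKernel; positivity

theorem hk_cont (N : ℕ) (t : ℝ) : Continuous (fun x => heatKernel N x t) := by
  unfold heatKernel; fun_prop

theorem hk_integral (N : ℕ) {t : ℝ} (ht : 0 < t) : ∫ x, heatKernel N x t = 1 := by
  unfold heatKernel
  rw [integral_const_mul]
  have h := GaussianFourier.integral_rexp_neg_mul_sq_norm (V := EuclideanSpace ℝ (Fin N))
    (b := 1 / (4 * t)) (by positivity)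
  have e : (fun x : EuclideanSpace ℝ (Fin N) => Real.exp (-‖x‖ ^ 2 / (4 * t))) =
      fun v => rexp (-(1 / (4 * t)) * ‖v‖ ^ 2) := by
    funext v; congr 1; ring
  rw [e, h, finrank_euclideanSpace_fin]
  have e2 : π / (1 / (4 * t)) = 4 * π * t := by field_simp
  rw [e2, ← Real.rpow_add (by positivity)]
  have : -(N:ℝ) / 2 + N / 2 = 0 := by ring
  rw [this, Real.rpow_zero]

theorem hk_integrable (N : ℕ) {t : ℝ} (ht : 0 < t) : Integrable (fun x => heatKernel N x t) := by
  by_contra h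
  have := hk_integral N ht
  rw [integral_undef h] at this
  exact zero_ne_one this

theorem hk_lintegral (N : ℕ) (m : EuclideanSpace ℝ (Fin N)) {t : ℝ} (ht : 0 < t) :
    ∫⁻ x, ENNReal.ofReal (heatKernel N (x - m) t) = 1 := by
  rw [lintegral_sub_right_eq_self (fun x => ENNReal.ofReal (heatKernel N x t)) m,
    ← ofReal_integral_eq_lintegral_ofReal (hk_integrable N ht)
      (ae_of_all _ fun x => hk_nonneg N x ht), hk_integral N ht, ENNReal.ofReal_one]

theorem hk_mul (N : ℕ) (x y z : EuclideanSpace ℝ (Fin N)) {t s : ℝ} (ht : 0 < t) (hs : 0 < s) :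
    heatKernel N (x - y) t * heatKernel N (y - z) s =
      heatKernel N (x - z) (t + s) *
        heatKernel N (y - ((s / (t + s)) • x + (t / (t + s)) • z)) (t * s / (t + s)) := by
  obtain ⟨u, hu⟩ : ∃ u, u = x - y := ⟨_, rfl⟩
  obtain ⟨v, hv⟩ : ∃ v, v = y - z := ⟨_, rfl⟩
  have h1 : x - z = u + v := by rw [hu, hv]; abel
  have hts : t + s ≠ 0 := by positivity
  have h2 : y - ((s / (t + s)) • x + (t / (t + s)) • z) =
      (t / (t + s)) • v - (s / (t + s)) • u := by
    have : y = (s / (t + s)) • y + (t / (t + s)) • y := by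
      rw [← add_smul, ← add_div, add_comm s t, div_self hts, one_smul]
    rw [hu, hv, smul_sub, smul_sub]
    nth_rewrite 1 [this]
    abel
  rw [h1, h2, ← hu, ← hv]
  unfold heatKernel
  rw [mul_mul_mul_comm, mul_mul_mul_comm ((4 * π * (t + s)) ^ (-(N : ℝ) / 2)),
    ← Real.mul_rpow (by positivity) (by positivity),
    ← Real.mul_rpow (by positivity) (by positivity), ← Real.exp_add, ← Real.exp_add]
  congr 2
  · field_simp
  · rw [norm_add_sq_real, norm_sub_sq_real, norm_smul, norm_smul, inner_smul_left,
      inner_smul_right, real_inner_comm u v]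
    simp only [Real.norm_eq_abs, mul_pow, sq_abs, conj_trivial]
    field_simp
    ring

theorem ball_rpow_scale (N : ℕ) (hN : 1 ≤ N) (α : ℝ) (hα : α < N) {r : ℝ} (hr : 0 < r) :
    ∫⁻ y in ball (0 : EuclideanSpace ℝ (Fin N)) r, ENNReal.ofReal (‖y‖ ^ (-α)) =
      ENNReal.ofReal (r ^ ((N : ℝ) - α) *
        ∫ y in ball (0 : EuclideanSpace ℝ (Fin N)) 1, ‖y‖ ^ (-α)) := by
  have hi : IntegrableOn (fun y : EuclideanSpace ℝ (Fin N) => ‖y‖ ^ (-α)) (ball 0 r) := by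
    refine integrableOn_ball_of_norm_le_rpow (C := 1) (α := α) ?_ ?_ ?_ ?_
    · simpa using hN
    · simpa using hα
    · refine ae_of_all _ fun y => ?_
      rw [Real.norm_of_nonneg (by positivity), one_mul]
    · exact (measurable_norm.pow_const _).aestronglyMeasurable
  rw [← ofReal_integral_eq_lintegral_ofReal hi (ae_of_all _ fun y => by positivity)]
  congr 1
  have h := Measure.setIntegral_comp_smul_of_pos (volume : Measure (EuclideanSpace ℝ (Fin N)))
    (fun y => ‖y‖ ^ (-α)) (ball 0 1) hr
  rw [smul_unitBall_of_pos hr, finrank_euclideanSpace_fin] at h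
  have e : (fun y : EuclideanSpace ℝ (Fin N) => ‖r • y‖ ^ (-α)) =
      fun y => r ^ (-α) * ‖y‖ ^ (-α) := by
    funext y
    rw [norm_smul, Real.norm_of_nonneg hr.le, Real.mul_rpow hr.le (norm_nonneg _)]
  rw [e, integral_const_mul, smul_eq_mul] at h
  rw [sub_eq_add_neg, Real.rpow_add hr, mul_assoc, h, Real.rpow_natCast, ← mul_assoc,
    mul_inv_cancel₀ (by positivity), one_mul]

theorem sing_bound (N : ℕ) (hN : 1 ≤ N) (α : ℝ) (h0 : 0 < α) (hα : α < N) :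
    ∃ C : ℝ, 0 < C ∧ ∀ (m : EuclideanSpace ℝ (Fin N)) (τ : ℝ), 0 < τ →
      ∫⁻ y, ENNReal.ofReal (‖y‖ ^ (-α)) * ENNReal.ofReal (heatKernel N (y - m) τ) ≤
        ENNReal.ofReal (C * (1 / τ) ^ (α / 2)) := by
  set K := ∫ y in ball (0 : EuclideanSpace ℝ (Fin N)) 1, ‖y‖ ^ (-α) with hK
  have hK0 : 0 ≤ K := integral_nonneg fun y => by positivity
  refine ⟨(4 * π) ^ (-(N : ℝ) / 2) * K + 1, by positivity, fun m τ hτ => ?_⟩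
  have hr : 0 < √τ := by positivity
  rw [← lintegral_add_compl _ (measurableSet_ball (x := (0 : EuclideanSpace ℝ (Fin N))) (ε := √τ)),
    add_mul, ENNReal.ofReal_add (by positivity) (by positivity), one_mul]
  have hinv : (√τ) ^ (-α) = (1 / τ) ^ (α / 2) := by
    rw [Real.sqrt_eq_rpow, ← Real.rpow_mul hτ.le, one_div τ, Real.inv_rpow hτ.le,
      ← Real.rpow_neg hτ.le]
    congr 1; ring
  refine add_le_add ?_ ?_
  · calc _ ≤ ∫⁻ y in ball (0 : EuclideanSpace ℝ (Fin N)) (√τ), ENNReal.ofReal (‖y‖ ^ (-α)) *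
          ENNReal.ofReal ((4 * π * τ) ^ (-(N : ℝ) / 2)) := by
          refine lintegral_mono fun y => ?_
          gcongr
          unfold heatKernel
          apply mul_le_of_le_one_right (by positivity)
          rw [Real.exp_le_one_iff, neg_div]
          simp only [Left.neg_nonpos_iff]; positivity
      _ = _ := by
          rw [lintegral_mul_const _ (by fun_prop), ball_rpow_scale N hN α hα hr,
            ← ENNReal.ofReal_mul (by positivity), ← hK]
          congr 1
          rw [← hinv, sub_eq_add_neg, Real.rpow_add hr,
            Real.mul_rpow (x := 4 * π) (by positivity) hτ.le]
          have : (√τ) ^ (N : ℝ) * τ ^ (-(N : ℝ) / 2) = 1 := by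
            rw [Real.sqrt_eq_rpow, ← Real.rpow_mul hτ.le, ← Real.rpow_add hτ]
            have : 1 / 2 * (N : ℝ) + -(N : ℝ) / 2 = 0 := by ring
            rw [this, Real.rpow_zero]
          linear_combination (√τ ^ (-α) * K * (4 * π) ^ (-(N : ℝ) / 2)) * this
  · calc _ ≤ ∫⁻ y in (ball (0 : EuclideanSpace ℝ (Fin N)) (√τ))ᶜ,
          ENNReal.ofReal ((1 / τ) ^ (α / 2)) * ENNReal.ofReal (heatKernel N (y - m) τ) := by
          refine setLIntegral_mono' measurableSet_ball.compl fun y hy => ?_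
          gcongr
          rw [← hinv]
          apply Real.rpow_le_rpow_of_nonpos hr _ (by linarith)
          simpa using hy
      _ ≤ ∫⁻ y, ENNReal.ofReal ((1 / τ) ^ (α / 2)) * ENNReal.ofReal (heatKernel N (y - m) τ) :=
          setLIntegral_le_lintegral _ _
      _ = _ := by
          have := hk_cont N τ
          rw [lintegral_const_mul _ (by fun_prop), hk_lintegral N m hτ, mul_one]

theorem ul_aesm (N : ℕ) {φ : EuclideanSpace ℝ (Fin N) → ℝ} (h : MemL1ul N φ) :
    AEStronglyMeasurable φ := by
  apply LocallyIntegrable.aestronglyMeasurable (μ := volume)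
  intro x
  exact ⟨ball x 1, ball_mem_nhds x one_pos, h.1 x⟩

theorem ul_integrable (N : ℕ) {φ : EuclideanSpace ℝ (Fin N) → ℝ} (h : MemL1ul N φ)
    (h0 : ∀ x, 0 ≤ φ x) {t : ℝ} (ht : 0 < t) (x : EuclideanSpace ℝ (Fin N)) :
    Integrable (fun z => heatKernel N (x - z) t * φ z) := by
  have hm := ul_aesm N h
  have hc := hk_cont N t
  have hm2 : AEStronglyMeasurable (fun z => heatKernel N (x - z) t * φ z) :=
    (Continuous.aestronglyMeasurable (by fun_prop)).mul hm
  obtain ⟨M, hM⟩ := h.2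
  refine ⟨hm2, ?_⟩
  rw [hasFiniteIntegral_iff_ofReal (ae_of_all _ fun z => mul_nonneg (hk_nonneg N _ ht) (h0 z))]
  -- the comparison constant
  obtain ⟨A, hA0, hA⟩ : ∃ A : ℝ, 0 ≤ A ∧ ∀ y z : EuclideanSpace ℝ (Fin N), dist z y < 1 →
      heatKernel N (x - z) t ≤ A * heatKernel N (y - x) (2 * t) := by
    refine ⟨(4 * π * t) ^ (-(N : ℝ) / 2) / (4 * π * (2 * t)) ^ (-(N : ℝ) / 2) *
      Real.exp (1 / (4 * t)), by positivity, fun y z hyz => ?_⟩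
    unfold heatKernel
    have hp : 0 < (4 * π * (2 * t)) ^ (-(N : ℝ) / 2) := by positivity
    have e : ∀ a b c d : ℝ, 0 < b → a / b * c * (b * d) = a * (c * d) := by
      intro a b c d hb; field_simp
    rw [e _ _ _ _ hp, ← Real.exp_add]
    gcongr
    have h1 : ‖y - x‖ ≤ ‖x - z‖ + 1 := by
      have : y - x = -((x - z) + (z - y)) := by abel
      rw [this, norm_neg]
      refine (norm_add_le _ _).trans ?_
      rw [dist_eq_norm] at hyz
      linarith
    have h2 : ‖y - x‖ ^ 2 ≤ 2 * ‖x - z‖ ^ 2 + 2 := by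
      nlinarith [norm_nonneg (y - x), norm_nonneg (x - z), sq_nonneg (‖x - z‖ - 1)]
    have h3 : 1 / (4 * t) + -‖y - x‖ ^ 2 / (4 * (2 * t)) - -‖x - z‖ ^ 2 / (4 * t) =
      (2 * ‖x - z‖ ^ 2 + 2 - ‖y - x‖ ^ 2) / (8 * t) := by field_simp; ring
    have h4 : 0 ≤ (2 * ‖x - z‖ ^ 2 + 2 - ‖y - x‖ ^ 2) / (8 * t) :=
      div_nonneg (by linarith) (by positivity)
    linarith
  have hV0 : volume (ball (0 : EuclideanSpace ℝ (Fin N)) 1) ≠ 0 :=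
    (measure_ball_pos _ _ one_pos).ne'
  have hVt : volume (ball (0 : EuclideanSpace ℝ (Fin N)) 1) ≠ ⊤ := measure_ball_lt_top.ne
  set V := volume (ball (0 : EuclideanSpace ℝ (Fin N)) 1) with hV
  set S : Set (EuclideanSpace ℝ (Fin N) × EuclideanSpace ℝ (Fin N)) := {p | dist p.1 p.2 < 1}
    with hS
  have hSm : MeasurableSet S := (isOpen_lt (by fun_prop) (by fun_prop)).measurableSet
  have key : (∫⁻ z, ENNReal.ofReal (heatKernel N (x - z) t * φ z)) * V ≤
      ENNReal.ofReal A * ENNReal.ofReal M := by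
    have hc2 := hk_cont N (2 * t)
    calc _ = ∫⁻ z, ∫⁻ y, S.indicator
            (fun p => ENNReal.ofReal (heatKernel N (x - p.1) t * φ p.1)) (z, y) := by
          rw [← lintegral_mul_const'' _ hm2.aemeasurable.ennreal_ofReal]
          refine lintegral_congr fun z => ?_
          have : ∀ y, S.indicator
            (fun p => ENNReal.ofReal (heatKernel N (x - p.1) t * φ p.1)) (z, y) =
            (ball z 1).indicator (fun _ => ENNReal.ofReal (heatKernel N (x - z) t * φ z)) y := by
            intro y
            simp only [indicator, hS, mem_ofPred_eq, mem_ball, dist_comm z y]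
          simp_rw [this]
          rw [lintegral_indicator measurableSet_ball, setLIntegral_const, hV,
            ← Measure.addHaar_ball_center volume z]
      _ = ∫⁻ y, ∫⁻ z, S.indicator
            (fun p => ENNReal.ofReal (heatKernel N (x - p.1) t * φ p.1)) (z, y) := by
          apply lintegral_lintegral_swap
          refine AEMeasurable.indicator ?_ hSm
          exact (hm2.aemeasurable.ennreal_ofReal).comp_quasiMeasurePreserving
            Measure.quasiMeasurePreserving_fst
      _ ≤ ∫⁻ y, ENNReal.ofReal A * ENNReal.ofReal (heatKernel N (y - x) (2 * t)) *
            ENNReal.ofReal M := by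
          refine lintegral_mono fun y => ?_
          calc _ ≤ ∫⁻ z, (ball y 1).indicator (fun z => ENNReal.ofReal A *
                ENNReal.ofReal (heatKernel N (y - x) (2 * t)) * ENNReal.ofReal (φ z)) z := by
                refine lintegral_mono fun z => ?_
                by_cases hz : dist z y < 1
                · rw [indicator_of_mem (by exact hz), indicator_of_mem (by exact hz),
                    ← ENNReal.ofReal_mul hA0, ← ENNReal.ofReal_mul
                      (mul_nonneg hA0 (hk_nonneg N _ (by positivity)))]
                  exact ENNReal.ofReal_le_ofReal (mul_le_mul_of_nonneg_right (hA y z hz) (h0 z))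
                · rw [indicator_of_notMem (by exact hz), indicator_of_notMem (by exact hz)]
            _ ≤ _ := by
                rw [lintegral_indicator measurableSet_ball,
                  lintegral_const_mul'' _ hm.restrict.aemeasurable.ennreal_ofReal]
                gcongr
                rw [← ofReal_integral_eq_lintegral_ofReal (h.1 y) (ae_of_all _ h0)]
                apply ENNReal.ofReal_le_ofReal
                refine le_trans (le_of_eq ?_) (hM y)
                refine integral_congr_ae (ae_of_all _ fun z => ?_)
                exact (abs_of_nonneg (h0 z)).symm
      _ = _ := by
          rw [lintegral_mul_const _ (by fun_prop), lintegral_const_mul _ (by fun_prop),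
            hk_lintegral N x (by positivity), mul_one]
  by_contra hcon
  rw [not_lt, top_le_iff] at hcon
  rw [hcon, ENNReal.top_mul hV0, top_le_iff] at key
  exact ENNReal.mul_ne_top ENNReal.ofReal_ne_top ENNReal.ofReal_ne_top key

/-- smoothing estimate e^{tΔ}[|·|^{-α} e^{sΔ}φ] ≤ C (1/t + 1/s)^{α/2}
e^{(t+s)Δ}φ with α = γ/θ ∈ (0, N), for nonnegative φ ∈ L¹_ul(ℝ^N). -/
theorem statement8 (N : ℕ) (hN : 1 ≤ N) (γ θ : ℝ) (hθ : θ ∈ Set.Ioc (0:ℝ) 1)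
    (hα : 0 < γ / θ ∧ γ / θ < N) :
    ∃ C > 0, ∀ φ : EuclideanSpace ℝ (Fin N) → ℝ,
      MemL1ul N φ → (∀ x, 0 ≤ φ x) → ∀ t > 0, ∀ s > 0,
      ∀ᵐ x : EuclideanSpace ℝ (Fin N),
        (∫ y, heatKernel N (x - y) t *
            (‖y‖ ^ (-(γ / θ)) * ∫ z, heatKernel N (y - z) s * φ z)) ≤
          C * (1 / t + 1 / s) ^ (γ / (2 * θ)) *
            ∫ y, heatKernel N (x - y) (t + s) * φ y := by
  obtain ⟨C, hC, hb⟩ := sing_bound N hN (γ / θ) hα.1 hα.2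
  refine ⟨C, hC, fun φ hφ h0 t ht s hs => ae_of_all _ fun x => ?_⟩
  have hexp : γ / (2 * θ) = γ / θ / 2 := by rw [div_div, mul_comm]
  rw [hexp]
  set α := γ / θ
  have hts : 0 < t + s := by positivity
  have hR : 0 ≤ C * (1 / t + 1 / s) ^ (α / 2) * ∫ y, heatKernel N (x - y) (t + s) * φ y :=
    mul_nonneg (by positivity)
      (integral_nonneg fun y => mul_nonneg (hk_nonneg N _ hts) (h0 y))
  by_cases hint : Integrable (fun y => heatKernel N (x - y) t *
            (‖y‖ ^ (-α) * ∫ z, heatKernel N (y - z) s * φ z))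
  swap
  · rw [integral_undef hint]; exact hR
  rw [← ENNReal.ofReal_le_ofReal_iff hR, ofReal_integral_eq_lintegral_ofReal hint
    (ae_of_all _ fun y => mul_nonneg (hk_nonneg N _ ht) (mul_nonneg (by positivity)
      (integral_nonneg fun z => mul_nonneg (hk_nonneg N _ hs) (h0 z)))),
    ENNReal.ofReal_mul (by positivity),
    ofReal_integral_eq_lintegral_ofReal (ul_integrable N hφ h0 hts x)
      (ae_of_all _ fun z => mul_nonneg (hk_nonneg N _ hts) (h0 z))]
  have hmφ : AEMeasurable (fun z => ENNReal.ofReal (φ z)) :=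
    (ul_aesm N hφ).aemeasurable.ennreal_ofReal
  have hct := hk_cont N t
  have hcs := hk_cont N s
  have hcts := hk_cont N (t + s)
  have hτ : 0 < t * s / (t + s) := by positivity
  have hτe : 1 / (t * s / (t + s)) = 1 / t + 1 / s := by field_simp; ring
  have hcτ := hk_cont N (t * s / (t + s))
  have hW : Measurable fun y : EuclideanSpace ℝ (Fin N) => ENNReal.ofReal (‖y‖ ^ (-α)) := by
    fun_prop
  calc _ = ∫⁻ y, ∫⁻ z, ENNReal.ofReal (heatKernel N (x - y) t) * ENNReal.ofReal (‖y‖ ^ (-α)) *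
          ENNReal.ofReal (heatKernel N (y - z) s) * ENNReal.ofReal (φ z) := by
        refine lintegral_congr fun y => ?_
        rw [ENNReal.ofReal_mul (hk_nonneg N _ ht), ENNReal.ofReal_mul (by positivity),
          ofReal_integral_eq_lintegral_ofReal (ul_integrable N hφ h0 hs y)
          (ae_of_all _ fun z => mul_nonneg (hk_nonneg N _ hs) (h0 z)), ← mul_assoc,
          ← lintegral_const_mul' _ _ (ENNReal.mul_ne_top ENNReal.ofReal_ne_top
            ENNReal.ofReal_ne_top)]
        refine lintegral_congr fun z => ?_
        rw [ENNReal.ofReal_mul (hk_nonneg N _ hs), ← mul_assoc]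
    _ = ∫⁻ z, ∫⁻ y, ENNReal.ofReal (heatKernel N (x - y) t) * ENNReal.ofReal (‖y‖ ^ (-α)) *
          ENNReal.ofReal (heatKernel N (y - z) s) * ENNReal.ofReal (φ z) := by
        apply lintegral_lintegral_swap
        have hmeas : Measurable (fun p : EuclideanSpace ℝ (Fin N) × EuclideanSpace ℝ (Fin N) =>
            ENNReal.ofReal (heatKernel N (x - p.1) t) * ENNReal.ofReal (‖p.1‖ ^ (-α)) *
            ENNReal.ofReal (heatKernel N (p.1 - p.2) s)) := by
          have m1 : Measurable (fun p : EuclideanSpace ℝ (Fin N) × EuclideanSpace ℝ (Fin N) =>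
            ENNReal.ofReal (heatKernel N (x - p.1) t)) :=
            (Continuous.measurable (by fun_prop)).ennreal_ofReal
          have m3 : Measurable (fun p : EuclideanSpace ℝ (Fin N) × EuclideanSpace ℝ (Fin N) =>
            ENNReal.ofReal (heatKernel N (p.1 - p.2) s)) :=
            (Continuous.measurable (by fun_prop)).ennreal_ofReal
          exact (m1.mul (hW.comp measurable_fst)).mul m3
        exact hmeas.aemeasurable.mul
          (hmφ.comp_quasiMeasurePreserving Measure.quasiMeasurePreserving_snd)
    _ = ∫⁻ z, ENNReal.ofReal (heatKernel N (x - z) (t + s) * φ z) *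
          ∫⁻ y, ENNReal.ofReal (‖y‖ ^ (-α)) * ENNReal.ofReal (heatKernel N
            (y - ((s / (t + s)) • x + (t / (t + s)) • z)) (t * s / (t + s))) := by
        refine lintegral_congr fun z => ?_
        rw [← lintegral_const_mul' _ _ ENNReal.ofReal_ne_top]
        refine lintegral_congr fun y => ?_
        have h := congrArg ENNReal.ofReal (hk_mul N x y z ht hs)
        rw [ENNReal.ofReal_mul (hk_nonneg N _ ht), ENNReal.ofReal_mul (hk_nonneg N _ hts)] at h
        rw [ENNReal.ofReal_mul (hk_nonneg N _ hts)]
        calc _ = ENNReal.ofReal (‖y‖ ^ (-α)) * ENNReal.ofReal (φ z) *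
              (ENNReal.ofReal (heatKernel N (x - y) t) *
                ENNReal.ofReal (heatKernel N (y - z) s)) := by ring
          _ = _ := by rw [h]; ring
    _ ≤ ∫⁻ z, ENNReal.ofReal (heatKernel N (x - z) (t + s) * φ z) *
          ENNReal.ofReal (C * (1 / t + 1 / s) ^ (α / 2)) := by
        refine lintegral_mono fun z => ?_
        have := hb ((s / (t + s)) • x + (t / (t + s)) • z) _ hτ
        rw [hτe] at this
        gcongr
    _ = _ := by
        rw [lintegral_mul_const' _ _ ENNReal.ofReal_ne_top, mul_comm]
end

section
/- Let 0 < r < N/(2−γ) with 0 < γ < min{2,N}, choose A with 2−γ < A < N/r, and let f ∈ S_q with q ∈ [1,∞) and q ≤ 1 + r. Define u₀(x) := F⁻¹(|x|^A) (when F(0) = ∞). Then u₀ ∈ L¹_ul(ℝ^N) and F(u₀)^{−r} ∈ L¹_ul(ℝ^N). -/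
open MeasureTheory Filter Set Metric Real

lemma aux_int (N : ℕ) (hN : 1 ≤ N) (b : ℝ) (hb : b < N) :
    IntegrableOn (fun x : EuclideanSpace ℝ (Fin N) => ‖x‖ ^ (-b)) (Metric.ball 0 1) := by
  haveI : Nonempty (Fin N) := ⟨⟨0, hN⟩⟩
  rw [integrableOn_fun_norm_addHaar volume (f := fun t : ℝ => t ^ (-b))]
  have h1 : IntegrableOn (fun y : ℝ => y ^ ((N : ℝ) - 1 - b)) (Ioo 0 1) := by
    have := (intervalIntegral.intervalIntegrable_rpow' (a := 0) (b := 1)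
      (r := (N : ℝ) - 1 - b) (by linarith))
    rw [intervalIntegrable_iff_integrableOn_Ioo_of_le zero_le_one] at this
    exact this
  refine h1.congr_fun ?_ measurableSet_Ioo
  intro y hy
  have hy0 : 0 < y := hy.1
  simp only [finrank_euclideanSpace, Fintype.card_fin, smul_eq_mul]
  rw [← Real.rpow_natCast, ← Real.rpow_add hy0, Nat.cast_sub hN]
  simp [sub_eq_add_neg]

lemma aux_mem (N : ℕ) (hN : 1 ≤ N) (b : ℝ) (hb0 : 0 ≤ b) (hb : b < N) (a C : ℝ) (ha : 0 ≤ a)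
    (hC : 0 ≤ C)
    (g : EuclideanSpace ℝ (Fin N) → ℝ) (hg : Measurable g)
    (hbd : ∀ x, x ≠ 0 → |g x| ≤ a + C * ‖x‖ ^ (-b)) : MemL1ul N g := by
  haveI : Nonempty (Fin N) := ⟨⟨0, hN⟩⟩
  set h : EuclideanSpace ℝ (Fin N) → ℝ :=
    (Metric.ball 0 1).indicator (fun x => ‖x‖ ^ (-b)) with hh
  have hint : Integrable h := (aux_int N hN b hb).integrable_indicator measurableSet_ball
  have hnn : ∀ x, 0 ≤ h x := fun x => Set.indicator_nonneg (fun x _ => by positivity) x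
  have hbd2 : ∀ᵐ x ∂(volume : Measure (EuclideanSpace ℝ (Fin N))), |g x| ≤ (a + C) + C * h x := by
    have : ∀ᵐ x ∂(volume : Measure (EuclideanSpace ℝ (Fin N))), x ≠ 0 :=
      Measure.ae_ne volume 0
    filter_upwards [this] with x hx
    refine (hbd x hx).trans ?_
    by_cases hx1 : x ∈ Metric.ball (0 : EuclideanSpace ℝ (Fin N)) 1
    · simp only [hh, Set.indicator_of_mem hx1]; linarith
    · simp only [hh, Set.indicator_of_notMem hx1]
      have : 1 ≤ ‖x‖ := by simpa using hx1
      have : ‖x‖ ^ (-b) ≤ 1 := Real.rpow_le_one_of_one_le_of_nonpos this (by linarith)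
      nlinarith
  have hI : ∀ y, IntegrableOn (fun x => (a + C) + C * h x) (Metric.ball y 1) := fun y =>
    (integrableOn_const measure_ball_lt_top.ne).add (hint.integrableOn.const_mul C)
  have hgI : ∀ y, IntegrableOn g (Metric.ball y 1) := fun y =>
    (hI y).mono' hg.aestronglyMeasurable (ae_restrict_of_ae hbd2)
  refine ⟨hgI, (a + C) * (volume : Measure (EuclideanSpace ℝ (Fin N))).real (Metric.ball 0 1)
      + C * ∫ x, h x, fun y => ?_⟩
  calc (∫ x in Metric.ball y 1, |g x|) ≤ ∫ x in Metric.ball y 1, ((a + C) + C * h x) :=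
        integral_mono_ae (hgI y).abs (hI y) (ae_restrict_of_ae hbd2)
    _ = (a + C) * (volume : Measure (EuclideanSpace ℝ (Fin N))).real (Metric.ball y 1)
        + C * ∫ x in Metric.ball y 1, h x := by
        have hc : Integrable (fun _ : EuclideanSpace ℝ (Fin N) => a + C)
            (volume.restrict (Metric.ball y 1)) :=
          integrableOn_const measure_ball_lt_top.ne
        rw [integral_add hc
          (hint.integrableOn.const_mul C), integral_const_mul]
        simp [mul_comm]
    _ ≤ _ := by
        have h1 : (volume : Measure (EuclideanSpace ℝ (Fin N))).real (Metric.ball y 1)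
          = (volume : Measure (EuclideanSpace ℝ (Fin N))).real (Metric.ball 0 1) := by
          simp only [Measure.real, Measure.addHaar_ball_center]
        rw [h1]
        gcongr
        · exact Filter.Eventually.of_forall hnn
        · exact Measure.restrict_le_self

lemma aux_F (f F : ℝ → ℝ) (hf_cont : ContinuousOn f (Set.Ici 0))
    (hf_pos : ∀ x > 0, 0 < f x)
    (hF : ∀ u, F u = ∫ τ in Set.Ioi u, 1 / f τ)
    (hF_fin : ∀ u > 0, IntegrableOn (fun τ => 1 / f τ) (Set.Ioi u)) :
    (∀ u > 0, 0 < F u) ∧ (∀ u > 0, HasDerivAt F (-(1 / f u)) u) := by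
  constructor
  · intro u hu
    rw [hF, setIntegral_pos_iff_support_of_nonneg_ae _ (hF_fin u hu)]
    · have : Ioi u ⊆ (Function.support fun τ => 1 / f τ) ∩ Ioi u := fun x hx =>
        ⟨(one_div_pos.2 (hf_pos x (hu.trans hx))).ne', hx⟩
      exact lt_of_lt_of_le (by simp) (measure_mono this)
    · filter_upwards [ae_restrict_mem measurableSet_Ioi] with x hx
      exact (one_div_pos.2 (hf_pos x (hu.trans hx))).le
  · intro u hu
    have hc : ContinuousOn (fun τ => 1 / f τ) (Ioi 0) :=
      continuousOn_const.div (hf_cont.mono Ioi_subset_Ici_self) (fun x hx => (hf_pos x hx).ne')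
    have hu2 : 0 < u / 2 := by linarith
    have hsub : uIcc (u/2) u ⊆ Ioi 0 := by
      rw [uIcc_of_le (by linarith)]; intro x hx; exact hu2.trans_le hx.1
    have hd : HasDerivAt (fun v => ∫ τ in (u/2)..v, 1 / f τ) (1 / f u) u :=
      intervalIntegral.integral_hasDerivAt_right ((hc.mono hsub).intervalIntegrable)
        (hc.stronglyMeasurableAtFilter isOpen_Ioi u hu)
        (hc.continuousAt (Ioi_mem_nhds hu))
    have hd2 := hd.const_sub (F (u/2))
    refine hd2.congr_of_eventuallyEq ?_
    filter_upwards [Ioi_mem_nhds hu] with v hv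
    have := intervalIntegral.integral_Ioi_sub_Ioi' (hF_fin (u/2) hu2) (hF_fin v hv)
    rw [← hF, ← hF] at this
    linarith

lemma aux_bound (f f' F : ℝ → ℝ) (q s : ℝ) (hs : 0 < s) (hqs : q < 1 + s)
    (hf_diff : ∀ x > 0, HasDerivAt f (f' x) x)
    (hf_pos : ∀ x > 0, 0 < f x)
    (hFpos : ∀ u > 0, 0 < F u) (hFd : ∀ u > 0, HasDerivAt F (-(1 / f u)) u)
    (hq : Tendsto (fun ξ => f' ξ * F ξ) atTop (nhds q)) :
    ∃ a C : ℝ, 0 ≤ a ∧ 0 ≤ C ∧ ∀ u > 0, u ≤ a + C * F u ^ (-s) := by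
  obtain ⟨a, ha⟩ := Filter.eventually_atTop.1
    ((hq.eventually (gt_mem_nhds hqs)).and (Filter.eventually_gt_atTop 0))
  have ha0 : 0 < a := (ha a le_rfl).2
  have hpos : ∀ x ∈ Ici a, 0 < x := fun x hx => ha0.trans_le hx
  have hd1 : ∀ x > 0, HasDerivAt (fun u => f u * F u ^ (1 + s))
      (f' x * F x ^ (1 + s) + f x * (-(1 / f x) * (1 + s) * F x ^ (1 + s - 1))) x := fun x hx =>
    (hf_diff x hx).mul ((hFd x hx).rpow_const (Or.inl (hFpos x hx).ne'))
  have hanti : AntitoneOn (fun u => f u * F u ^ (1 + s)) (Ici a) := by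
    apply antitoneOn_of_deriv_nonpos (convex_Ici a)
    · exact fun x hx => (hd1 x (hpos x hx)).continuousAt.continuousWithinAt
    · exact fun x hx =>
        (hd1 x (hpos x (interior_subset hx))).differentiableAt.differentiableWithinAt
    · intro x hx
      have hx' := interior_subset hx
      have hx0 := hpos x hx'
      rw [(hd1 x hx0).deriv]
      have hF0 := hFpos x hx0
      have hf0 := hf_pos x hx0
      have e1 : F x ^ (1 + s) = F x * F x ^ s := by
        rw [Real.rpow_add hF0, Real.rpow_one]
      have e2 : F x ^ (1 + s - 1) = F x ^ s := by congr 1; ring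
      rw [e1, e2]
      have e3 : f' x * (F x * F x ^ s) + f x * (-(1 / f x) * (1 + s) * F x ^ s)
        = (f' x * F x - (1 + s)) * F x ^ s := by field_simp; ring
      rw [e3]
      exact mul_nonpos_of_nonpos_of_nonneg (by linarith [(ha x hx').1]) (by positivity)
  set C1 := f a * F a ^ (1 + s) with hC1
  have hC1pos : 0 < C1 := mul_pos (hf_pos a ha0) (Real.rpow_pos_of_pos (hFpos a ha0) _)
  have hd2 : ∀ x > 0, HasDerivAt (fun u => F u ^ (-s))
      (-(1 / f x) * (-s) * F x ^ (-s - 1)) x := fun x hx =>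
    (hFd x hx).rpow_const (Or.inl (hFpos x hx).ne')
  refine ⟨a, C1 / s, ha0.le, by positivity, fun u hu => ?_⟩
  have hFs : 0 < F u ^ (-s) := Real.rpow_pos_of_pos (hFpos u hu) _
  rcases le_total u a with hua | hau
  · have : 0 ≤ C1 / s * F u ^ (-s) := by positivity
    linarith
  · have key := Convex.mul_sub_le_image_sub_of_le_deriv (convex_Ici a)
      (f := fun u => F u ^ (-s)) (C := s / C1)
      (fun x hx => (hd2 x (hpos x hx)).continuousAt.continuousWithinAt)
      (fun x hx => (hd2 x (hpos x (interior_subset hx))).differentiableAt.differentiableWithinAt)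
      (by
        intro x hx
        have hx' := interior_subset hx
        have hx0 := hpos x hx'
        rw [(hd2 x hx0).deriv]
        have hF0 := hFpos x hx0
        have hf0 := hf_pos x hx0
        have hle : f x * F x ^ (1 + s) ≤ C1 := hanti self_mem_Ici hx' hx'
        have e1 : F x ^ (-s - 1) = (F x ^ (1 + s))⁻¹ := by
          rw [← Real.rpow_neg hF0.le]; congr 1; ring
        have hp : 0 < F x ^ (1 + s) := Real.rpow_pos_of_pos hF0 _
        have e2 : -(1 / f x) * (-s) * F x ^ (-s - 1) = s / (f x * F x ^ (1 + s)) := by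
          rw [e1]; field_simp
        rw [e2]
        gcongr) a self_mem_Ici u hau hau
    have hFa : 0 < F a ^ (-s) := Real.rpow_pos_of_pos (hFpos a ha0) _
    have h3 : s / C1 * (u - a) ≤ F u ^ (-s) := by
      linarith
    have h4 : C1 / s * (s / C1 * (u - a)) ≤ C1 / s * F u ^ (-s) := by gcongr
    have h5 : C1 / s * (s / C1 * (u - a)) = u - a := by field_simp
    linarith

/-- for 0 < r < N/(2-γ), 2-γ < A < N/r, f ∈ S_q with q ≤ 1+r and F(0) = ∞
(so that F⁻¹ inverts F on all of (0,∞)), the initial function u₀(x) = F⁻¹(|x|^A)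
satisfies u₀ ∈ L¹_ul(ℝ^N) and F(u₀)^{-r} ∈ L¹_ul(ℝ^N). -/
theorem statement18 (N : ℕ) (hN : 1 ≤ N) (γ : ℝ) (hγ : 0 < γ ∧ γ < min 2 (N : ℝ))
    (r : ℝ) (hr : 0 < r ∧ r < N / (2 - γ))
    (A : ℝ) (hA : 2 - γ < A ∧ A < N / r)
    (f f' : ℝ → ℝ) (q : ℝ) (hq1 : 1 ≤ q) (hqr : q ≤ 1 + r)
    (hf_cont : ContinuousOn f (Set.Ici 0))
    (hf_diff : ∀ x > 0, HasDerivAt f (f' x) x)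
    (hf'_cont : ContinuousOn f' (Set.Ioi 0))
    (hf_pos : ∀ x > 0, 0 < f x)
    (hf'_nonneg : ∀ x > 0, 0 ≤ f' x)
    (F : ℝ → ℝ) (hF : ∀ u, F u = ∫ τ in Set.Ioi u, 1 / f τ)
    (hF_fin : ∀ u > 0, IntegrableOn (fun τ => 1 / f τ) (Set.Ioi u))
    (hq : Tendsto (fun ξ => f' ξ * F ξ) atTop (nhds q))
    (Finv : ℝ → ℝ)
    (hFinv_left : ∀ u > 0, Finv (F u) = u)
    (hFinv_right : ∀ ξ > 0, 0 < Finv ξ ∧ F (Finv ξ) = ξ) :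
    MemL1ul N (fun x : EuclideanSpace ℝ (Fin N) => Finv (‖x‖ ^ A)) ∧
    MemL1ul N (fun x : EuclideanSpace ℝ (Fin N) =>
      F (Finv (‖x‖ ^ A)) ^ (-r)) := by
  obtain ⟨hr0, -⟩ := hr
  have hA0 : 0 < A := by have := hγ.2.trans_le (min_le_left _ _); linarith [hA.1]
  have hAr : A * r < N := (lt_div_iff₀ hr0).1 hA.2
  obtain ⟨hFpos, hFd⟩ := aux_F f F hf_cont hf_pos hF hF_fin
  obtain ⟨s, hs1, hs2⟩ := exists_between ((lt_div_iff₀' hA0).2 hAr)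
  have hs0 : 0 < s := hr0.trans hs1
  have hAs : A * s < N := (lt_div_iff₀' hA0).1 hs2
  obtain ⟨a, C, ha, hC, hbd⟩ := aux_bound f f' F q s hs0 (by linarith) hf_diff hf_pos hFpos hFd hq
  have hFanti : AntitoneOn F (Ioi 0) := by
    apply antitoneOn_of_deriv_nonpos (convex_Ioi 0)
    · exact fun x hx => (hFd x hx).continuousAt.continuousWithinAt
    · exact fun x hx => (hFd x (interior_subset hx)).differentiableAt.differentiableWithinAt
    · intro x hx
      have hx' : 0 < x := interior_subset hx
      rw [(hFd x hx').deriv]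
      have := one_div_pos.2 (hf_pos x hx')
      linarith
  have hGanti : Antitone (fun t : Ioi (0:ℝ) => Finv t) := by
    intro σ τ hστ
    by_contra hlt
    simp only [not_le] at hlt
    have h1 := hFinv_right σ σ.2
    have h2 := hFinv_right τ τ.2
    have h3 := hFanti h1.1 h2.1 hlt.le
    rw [h1.2, h2.2] at h3
    have : σ = τ := le_antisymm hστ h3
    rw [this] at hlt
    exact lt_irrefl _ hlt
  have hnpos : ∀ x : EuclideanSpace ℝ (Fin N), x ≠ 0 → 0 < ‖x‖ ^ A := fun x hx =>
    Real.rpow_pos_of_pos (norm_pos_iff.2 hx) _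
  have hpow : ∀ (x : EuclideanSpace ℝ (Fin N)) (t : ℝ),
      (‖x‖ ^ A) ^ (-t) = ‖x‖ ^ (-(A * t)) := fun x t => by
    rw [← Real.rpow_mul (norm_nonneg x)]; congr 1; ring
  have hm1 : Measurable (fun x : EuclideanSpace ℝ (Fin N) => Finv (‖x‖ ^ A)) := by
    apply measurable_of_measurable_on_compl_singleton 0
    have hφ : Measurable (fun x : {x : EuclideanSpace ℝ (Fin N) | x ≠ 0} =>
        (⟨‖(x : EuclideanSpace ℝ (Fin N))‖ ^ A, hnpos x x.2⟩ : Ioi (0:ℝ))) := by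
      apply Measurable.subtype_mk
      fun_prop
    exact hGanti.measurable.comp hφ
  have hm2 : Measurable (fun x : EuclideanSpace ℝ (Fin N) => F (Finv (‖x‖ ^ A)) ^ (-r)) := by
    apply measurable_of_measurable_on_compl_singleton 0
    have hφ : Measurable (fun x : {x : EuclideanSpace ℝ (Fin N) | x ≠ 0} =>
        (‖(x : EuclideanSpace ℝ (Fin N))‖ ^ A) ^ (-r)) := by fun_prop
    convert hφ using 1
    funext x
    simp only [Set.domRestrict_apply]
    rw [(hFinv_right _ (hnpos x x.2)).2]
  constructor
  · refine aux_mem N hN (A * s) (by positivity) hAs a C ha hC _ hm1 fun x hx => ?_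
    obtain ⟨h1, h2⟩ := hFinv_right _ (hnpos x hx)
    rw [abs_of_pos h1]
    have := hbd _ h1
    rwa [h2, hpow] at this
  · refine aux_mem N hN (A * r) (by positivity) hAr 0 1 le_rfl zero_le_one _ hm2 fun x hx => ?_
    obtain ⟨h1, h2⟩ := hFinv_right _ (hnpos x hx)
    rw [h2, hpow, abs_of_nonneg (by positivity)]
    linarith
end
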